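/- arXiv:2110.10676 — 2 statements merged into one kernel-verified Lean document; each statement's English description precedes it below -/
import Mathlib

section
/- Let X be a finite connected poset and F a field with char(F) ∉ {2, 3}. Then every bijective F-linear map φ: I(X,F) → I(X,F) that preserves tripotents (φ(f)³ = φ(f) whenever f³ = f) is of the form φ = r·ψ, where r ∈ {−1, 1} and ψ is either an automorphism or an anti-automorphism of I(X,F). -/
open IncidenceAlgebra

/-- A poset is connected if any two elements can be joined by a sequence of elements
in which consecutive elements are comparable. -/
def PosetConnected (X : Type*) [PartialOrder X] : Prop :=
  ∀ x y : X, Relation.ReflTransGen (fun a b : X => a ≤ b ∨ b ≤ a) x y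


namespace Trip

section ring
variable {A : Type*} [Ring A]

lemma orth_of_trip (h2 : ∀ a : A, a + a = 0 → a = 0) (h3 : ∀ a : A, a + a + a = 0 → a = 0)
    {a b : A} (ha : a ^ 3 = a) (hb : b ^ 3 = b) (hp : (a + b) ^ 3 = a + b)
    (hm : (a - b) ^ 3 = a - b) : a * b = 0 := by
  have k1 : a*a*b + a*b*a + b*a*a + (a*b*b + b*a*b + b*b*a) = 0 := by
    linear_combination (norm := noncomm_ring) hp - ha - hb
  have k2 : -(a*a*b + a*b*a + b*a*a) + (a*b*b + b*a*b + b*b*a) = 0 := by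
    linear_combination (norm := noncomm_ring) hm - ha + hb
  have k3 : a*a*b + a*b*a + b*a*a = 0 := by
    apply h2
    linear_combination (norm := noncomm_ring) k1 - k2
  have k4 : a * b = b * a := by
    have q1 : a * (a*a*b + a*b*a + b*a*a) = 0 := by rw [k3, mul_zero]
    have q2 : (a*a*b + a*b*a + b*a*a) * a = 0 := by rw [k3, zero_mul]
    have q3 : a ^ 3 * b = a * b := by rw [ha]
    have q4 : b * a ^ 3 = b * a := by rw [ha]
    linear_combination (norm := noncomm_ring) q1 - q2 - q3 + q4
  have k5 : a * a * b = 0 := by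
    apply h3
    have q1 : a * (a * b) = a * (b * a) := by rw [k4]
    have q2 : a * b * a = b * a * a := by rw [k4]
    linear_combination (norm := noncomm_ring) k3 + 2 * q1 + q2
  calc a * b = a ^ 3 * b := by rw [ha]
    _ = a * (a * a * b) := by noncomm_ring
    _ = 0 := by rw [k5, mul_zero]

lemma half (h2 : ∀ a : A, a + a = 0 → a = 0) {E N : A} (hE : E * E = E)
    (hp : (E + N) * (E + N) = E + N) (hm : (E - N) * (E - N) = E - N) :
    E * N + N * E = N ∧ N * N = 0 := by
  have hN : N * N = 0 := by
    apply h2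
    linear_combination (norm := noncomm_ring) hp + hm - 2 * hE
  exact ⟨by linear_combination (norm := noncomm_ring) hp - hE - hN, hN⟩

lemma peirce {E G N : A} (hE : E * E = E) (hG : G * G = G) (hEG : E * G = 0) (hGE : G * E = 0)
    (h1 : E * N + N * E = N) (h2 : G * N + N * G = N) (hN : N * N = 0)
    (K : ∀ M N : A, M * G = M → G * N = N → M * N = 0 → M = 0 ∨ N = 0) :
    (E * N = N ∧ N * G = N) ∨ (G * N = N ∧ N * E = N) := by
  have a1 : E * N = E * N * G := by
    have : E * (G * N + N * G) = E * N := by rw [h2]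
    rw [mul_add, ← mul_assoc, hEG, zero_mul, zero_add, ← mul_assoc] at this
    exact this.symm
  have a2 : N * E = G * (N * E) := by
    have : (G * N + N * G) * E = N * E := by rw [h2]
    rw [add_mul, mul_assoc N, hGE, mul_zero, add_zero, mul_assoc] at this
    exact this.symm
  have a3 : (E * N) * (N * E) = 0 := by
    rw [mul_assoc, ← mul_assoc N, hN, zero_mul, mul_zero]
  rcases K _ _ a1.symm a2.symm a3 with h | h
  · right
    rw [h, zero_add] at h1
    exact ⟨by rw [← h1]; exact a2.symm, h1⟩
  · left
    rw [h, add_zero] at h1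
    exact ⟨h1, by rw [← h1]; exact a1.symm⟩

end ring

variable {X : Type*} [PartialOrder X] [Fintype X] [LocallyFiniteOrder X] [DecidableEq X]
    {F : Type*} [Field F]

lemma exMax {E N : IncidenceAlgebra F X} (h : E * N = N) {w v : X} (hw : N w v ≠ 0) :
    ∃ m, w ≤ m ∧ E m m ≠ 0 ∧ N m v ≠ 0 := by
  obtain ⟨m, hm, hmax⟩ := (Set.toFinite {t | w ≤ t ∧ N t v ≠ 0}).exists_maximal ⟨w, le_rfl, hw⟩
  refine ⟨m, hm.1, ?_, hm.2⟩
  intro h0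
  apply hm.2
  rw [← h, mul_apply]
  refine Finset.sum_eq_zero fun t ht => ?_
  have ht := (Finset.mem_Icc.1 ht).1
  by_cases htm : t = m
  · rw [htm, h0, zero_mul]
  · by_cases hz : N t v = 0
    · rw [hz, mul_zero]
    · exact absurd (le_antisymm (hmax ⟨hm.1.trans ht, hz⟩ ht) ht) htm

lemma exMin {E N : IncidenceAlgebra F X} (h : N * E = N) {w v : X} (hw : N w v ≠ 0) :
    ∃ m, m ≤ v ∧ E m m ≠ 0 ∧ N w m ≠ 0 := by
  obtain ⟨m, hm, hmax⟩ := (Set.toFinite {t | t ≤ v ∧ N w t ≠ 0}).exists_minimal ⟨v, le_rfl, hw⟩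
  refine ⟨m, hm.1, ?_, hm.2⟩
  intro h0
  apply hm.2
  rw [← h, mul_apply]
  refine Finset.sum_eq_zero fun t ht => ?_
  have ht := (Finset.mem_Icc.1 ht).2
  by_cases htm : t = m
  · rw [htm, h0, mul_zero]
  · by_cases hz : N w t = 0
    · rw [hz, zero_mul]
    · exact absurd (le_antisymm (hmax ⟨ht.trans hm.1, hz⟩ ht) ht).symm htm

lemma exEntry {N : IncidenceAlgebra F X} (h : N ≠ 0) : ∃ w v, N w v ≠ 0 := by
  by_contra! hc
  exact h (by ext a b _; exact hc a b)

lemma keyK {E : IncidenceAlgebra F X} {u : X} (hu : ∀ w, E w w ≠ 0 → w = u)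
    (M N : IncidenceAlgebra F X) (hM : M * E = M) (hN : E * N = N) (h : M * N = 0) :
    M = 0 ∨ N = 0 := by
  by_contra! hc
  obtain ⟨w, t, h1⟩ := exEntry hc.1
  obtain ⟨m, -, hm, h2⟩ := exMin hM h1
  obtain rfl := hu m hm
  obtain ⟨s, v, h3⟩ := exEntry hc.2
  obtain ⟨m', -, hm', h4⟩ := exMax hN h3
  obtain rfl := hu m' hm'
  have : (M * N) w v = M w m' * N m' v := by
    rw [mul_apply]
    apply Finset.sum_eq_single
    · intro b _ hb
      by_contra hne
      obtain ⟨p, hp, hp', -⟩ := exMin hM (left_ne_zero_of_mul hne)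
      obtain ⟨q, hq, hq', -⟩ := exMax hN (right_ne_zero_of_mul hne)
      rw [hu p hp'] at hp
      rw [hu q hq'] at hq
      exact hb (le_antisymm hq hp)
    · intro hn
      exact absurd (Finset.mem_Icc.2 ⟨le_of_ne_zero h2, le_of_ne_zero h4⟩) hn
  rw [h] at this
  exact mul_ne_zero h2 h4 this.symm

lemma mul_diag (f g : IncidenceAlgebra F X) (u : X) : (f * g) u u = f u u * g u u := by
  simp [mul_apply]

lemma sum_app {ι : Type*} (s : Finset ι) (f : ι → IncidenceAlgebra F X) (a b : X) :
    (∑ i ∈ s, f i) a b = ∑ i ∈ s, f i a b := by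
  classical
  induction s using Finset.induction_on with
  | empty => simp
  | insert i s hi ih => rw [Finset.sum_insert hi, Finset.sum_insert hi, IncidenceAlgebra.add_apply, ih]

lemma exDiag (E : X → IncidenceAlgebra F X) (hid : ∀ x, E x * E x = E x) (hne : ∀ x, E x ≠ 0)
    (horth : ∀ x y, x ≠ y → E x * E y = 0) (hsum : ∑ x, E x = 1) (x : X) :
    ∃ u, ∀ w, E x w w ≠ 0 → w = u := by
  have ex : ∀ u, ∃ x, E x u u ≠ 0 := by
    intro u
    by_contra! hc
    have : (∑ x, E x) u u = (1 : IncidenceAlgebra F X) u u := by rw [hsum]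
    rw [sum_app] at this
    simp [hc] at this
  have uniq : ∀ u x y, E x u u ≠ 0 → E y u u ≠ 0 → x = y := by
    intro u x y hx hy
    by_contra hxy
    have := mul_diag (E x) (E y) u
    rw [horth x y hxy] at this
    exact mul_ne_zero hx hy this.symm
  choose μ hμ using ex
  have hs : Function.Surjective μ := by
    intro x
    obtain ⟨w, v, h⟩ := exEntry (hne x)
    obtain ⟨m, -, hm, -⟩ := exMax (hid x) h
    exact ⟨m, uniq m _ _ (hμ m) hm⟩
  have hi := Finite.injective_iff_surjective.2 hs
  obtain ⟨u, hu⟩ := hs x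
  refine ⟨u, fun w hw => hi ?_⟩
  rw [hu]
  exact uniq w _ _ (hμ w) hw

/-- matrix unit -/
noncomputable def e (F : Type*) [Field F] (x y : X) : IncidenceAlgebra F X :=
  open Classical in
  ⟨fun a b => if a = x ∧ b = y ∧ x ≤ y then 1 else 0, by
    intro a b h
    rw [if_neg]
    rintro ⟨rfl, rfl, h'⟩
    exact h h'⟩

lemma e_apply {x y : X} (h : x ≤ y) (a b : X) :
    e F x y a b = if a = x ∧ b = y then 1 else 0 := by
  classical
  show (if a = x ∧ b = y ∧ x ≤ y then (1:F) else 0) = _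
  simp [h]

lemma e_mul {x y u v : X} (h : x ≤ y) (h' : u ≤ v) :
    e F x y * e F u v = if y = u then e F x v else 0 := by
  ext a b hab
  rw [mul_apply]
  simp only [e_apply h, e_apply h']
  by_cases hyu : y = u
  · subst hyu
    rw [if_pos rfl, e_apply (h.trans h')]
    by_cases hh : a = x ∧ b = v
    · obtain ⟨rfl, rfl⟩ := hh
      simp [h, h']
    · rw [if_neg hh]
      refine Finset.sum_eq_zero fun t _ => ?_
      by_cases h1 : a = x
      · have : b ≠ v := fun h => hh ⟨h1, h⟩
        simp [this]
      · simp [h1]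
  · rw [if_neg hyu]
    refine Finset.sum_eq_zero fun t _ => ?_
    by_cases ht : t = y
    · subst ht; simp [hyu]
    · simp [ht]

lemma e_mul_eq {x y v : X} (h : x ≤ y) (h' : y ≤ v) : e F x y * e F y v = e F x v := by
  rw [e_mul h h', if_pos rfl]

lemma e_mul_ne {x y u v : X} (h : x ≤ y) (h' : u ≤ v) (hne : y ≠ u) :
    e F x y * e F u v = 0 := by
  rw [e_mul h h', if_neg hne]

lemma e_ne {x y : X} (h : x ≤ y) : e F x y ≠ 0 := by
  intro h0
  have : e F x y x y = 0 := by rw [h0]; rfl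
  simp [e_apply h] at this

lemma ind (P : IncidenceAlgebra F X → Prop) (h0 : P 0) (hadd : ∀ f g, P f → P g → P (f + g))
    (hs : ∀ (c : F) f, P f → P (c • f)) (he : ∀ x y, x ≤ y → P (e F x y)) (f) : P f := by
  classical
  have : f = ∑ x, ∑ y, if x ≤ y then f x y • e F x y else 0 := by
    ext a b hab
    rw [sum_app, Finset.sum_eq_single a, sum_app, Finset.sum_eq_single b]
    · rw [if_pos hab, constSMul_apply, e_apply hab]; simp
    · intro y _ hy
      split_ifs with h
      · rw [constSMul_apply, e_apply h]; simp [hy.symm]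
      · rfl
    · simp
    · intro x _ hx
      rw [sum_app]
      refine Finset.sum_eq_zero fun y _ => ?_
      split_ifs with h
      · rw [constSMul_apply, e_apply h]; simp [hx.symm]
      · rfl
    · simp
  rw [this]
  refine Finset.sum_induction _ P hadd h0 fun x _ => Finset.sum_induction _ P hadd h0 fun y _ => ?_
  split_ifs with h
  · exact hs _ _ (he _ _ h)
  · exact h0

lemma sum_e : ∑ x : X, e F x x = 1 := by
  ext a b hab
  rw [sum_app, one_apply]
  simp only [e_apply le_rfl]
  split_ifs with h
  · subst h; simp
  · refine Finset.sum_eq_zero fun x _ => ?_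
    rw [if_neg]
    rintro ⟨rfl, rfl⟩; exact h rfl

lemma central (hconn : PosetConnected X) (f : IncidenceAlgebra F X)
    (hc : ∀ g, f * g = g * f) : ∃ c : F, f = c • 1 := by
  classical
  have hd : ∀ a b, a ≠ b → f a b = 0 := by
    intro a b hne
    by_cases hab : a ≤ b
    · have := congrArg (fun g : IncidenceAlgebra F X => g a b) (hc (e F b b))
      simp only [mul_apply, e_apply le_rfl] at this
      simpa [hab, hne] using this
    · exact apply_eq_zero_of_not_le hab f
  have hk : ∀ a b, a ≤ b → f a a = f b b := by
    intro a b hab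
    have := congrArg (fun g : IncidenceAlgebra F X => g a b) (hc (e F a b))
    simp only [mul_apply, e_apply hab] at this
    simpa [hab] using this
  have hk' : ∀ a b, f a a = f b b := by
    intro a b
    induction hconn a b with
    | refl => rfl
    | tail _ h ih =>
      rcases h with h | h
      · rw [ih, hk _ _ h]
      · rw [ih, hk _ _ h]
  by_cases hX : Nonempty X
  · obtain ⟨x⟩ := hX
    refine ⟨f x x, ?_⟩
    ext a b hab
    rw [constSMul_apply, one_apply]
    split_ifs with h
    · subst h; rw [hk' a x]; simp
    · rw [hd a b h]; simp
  · refine ⟨1, ?_⟩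
    ext a; exact absurd ⟨a⟩ hX

/-- main part -/
theorem jordan (h2 : ∀ a : IncidenceAlgebra F X, a + a = 0 → a = 0)
    (hconn : PosetConnected X)
    (ψ : IncidenceAlgebra F X →ₗ[F] IncidenceAlgebra F X)
    (hinj : Function.Injective ψ) (h1 : ψ 1 = 1)
    (hid : ∀ f, f * f = f → ψ f * ψ f = ψ f)
    (horth : ∀ f g, f * f = f → g * g = g → f * g = 0 → g * f = 0 → ψ f * ψ g = 0) :
    (∀ f g, ψ (f * g) = ψ f * ψ g) ∨ (∀ f g, ψ (f * g) = ψ g * ψ f) := by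
  set N : X → X → IncidenceAlgebra F X := fun x y => ψ (e F x y) with hNdef
  have nz : ∀ x y, x ≤ y → N x y ≠ 0 := by
    intro x y h h0
    exact e_ne h (hinj (by rw [map_zero]; exact h0))
  have Ei : ∀ x, N x x * N x x = N x x := fun x => hid _ (e_mul_eq le_rfl le_rfl)
  have Eo : ∀ x y, x ≠ y → N x x * N y y = 0 := fun x y h =>
    horth _ _ (e_mul_eq le_rfl le_rfl) (e_mul_eq le_rfl le_rfl) (e_mul_ne le_rfl le_rfl h)
      (e_mul_ne le_rfl le_rfl h.symm)
  have K : ∀ x, ∀ M L : IncidenceAlgebra F X, M * N x x = M → N x x * L = L → M * L = 0 →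
      M = 0 ∨ L = 0 := by
    intro x
    obtain ⟨u, hu⟩ := exDiag (fun x => N x x) Ei (fun x => nz x x le_rfl) Eo
      (by rw [← h1, ← sum_e, map_sum]) x
    exact keyK hu
  have L2 : ∀ x y, x < y → N x x * N x y + N x y * N x x = N x y ∧ N x y * N x y = 0 := by
    intro x y h
    have q1 := e_mul_eq (F := F) (le_refl x) (le_refl x)
    have q2 := e_mul_eq (F := F) (le_refl x) h.le
    have q3 := e_mul_ne (F := F) h.le h.le h.ne'
    have q4 := e_mul_ne (F := F) h.le (le_refl x) h.ne'
    apply half h2 (Ei x)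
    · have := hid (e F x x + e F x y) (by simp only [add_mul, mul_add, q1, q2, q3, q4]; simp)
      simpa only [map_add] using this
    · have := hid (e F x x - e F x y) (by simp only [sub_mul, mul_sub, q1, q2, q3, q4]; simp)
      simpa only [map_sub] using this
  have L2' : ∀ x y, x < y → N y y * N x y + N x y * N y y = N x y := by
    intro x y h
    have q1 := e_mul_eq (F := F) (le_refl y) (le_refl y)
    have q2 := e_mul_eq (F := F) h.le (le_refl y)
    have q3 := e_mul_ne (F := F) h.le h.le h.ne'
    have q4 := e_mul_ne (F := F) (le_refl y) h.le h.ne'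
    refine (half h2 (Ei y) ?_ ?_).1
    · have := hid (e F y y + e F x y) (by simp only [add_mul, mul_add, q1, q2, q3, q4]; simp)
      simpa only [map_add] using this
    · have := hid (e F y y - e F x y) (by simp only [sub_mul, mul_sub, q1, q2, q3, q4]; simp)
      simpa only [map_sub] using this
  -- orientation
  let Pr : X → X → Prop := fun x y => N x x * N x y = N x y ∧ N x y * N y y = N x y
  let Rv : X → X → Prop := fun x y => N y y * N x y = N x y ∧ N x y * N x x = N x y
  have PR : ∀ x y, x < y → Pr x y ∨ Rv x y := fun x y h =>
    peirce (Ei x) (Ei y) (Eo x y h.ne) (Eo y x h.ne') (L2 x y h).1 (L2' x y h) (L2 x y h).2 (K y)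
  have zer : ∀ {a b : X} {P Q : IncidenceAlgebra F X}, a ≠ b → P * N a a = P → N b b * Q = Q →
      P * Q = 0 := by
    intro a b P Q hab hP hQ
    rw [← hP, ← hQ, mul_assoc, ← mul_assoc (N a a), Eo a b hab, zero_mul, mul_zero]
  have nPR : ∀ x y, x < y → Pr x y → Rv x y → False := by
    intro x y h hp hr
    apply nz x y h.le
    rw [← hp.1]
    rw [← hr.1, ← mul_assoc, Eo x y h.ne, zero_mul]
  -- Jordan relations
  have J1 : ∀ x y z, x < y → x < z → y ≠ z → N x y * N x z + N x z * N x y = 0 := by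
    intro x y z hy hz _
    have q1 := e_mul_eq (F := F) (le_refl x) (le_refl x)
    have q2 := e_mul_eq (F := F) (le_refl x) hy.le
    have q3 := e_mul_eq (F := F) (le_refl x) hz.le
    have q4 := e_mul_ne (F := F) hy.le hy.le hy.ne'
    have q5 := e_mul_ne (F := F) hy.le hz.le hy.ne'
    have q6 := e_mul_ne (F := F) hz.le hy.le hz.ne'
    have q7 := e_mul_ne (F := F) hz.le hz.le hz.ne'
    have q8 := e_mul_ne (F := F) hy.le (le_refl x) hy.ne'
    have q9 := e_mul_ne (F := F) hz.le (le_refl x) hz.ne'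
    have := hid (e F x x + e F x y + e F x z)
      (by simp only [add_mul, mul_add, q1, q2, q3, q4, q5, q6, q7, q8, q9]; simp)
    simp only [map_add] at this
    change (N x x + N x y + N x z) * (N x x + N x y + N x z) = N x x + N x y + N x z at this
    linear_combination (norm := noncomm_ring) this - Ei x - (L2 x y hy).1 - (L2 x z hz).1
      - (L2 x y hy).2 - (L2 x z hz).2
  have J2 : ∀ x y z, x < z → y < z → x ≠ y → N x z * N y z + N y z * N x z = 0 := by
    intro x y z hx hy _
    have q1 := e_mul_eq (F := F) (le_refl z) (le_refl z)
    have q2 := e_mul_eq (F := F) hx.le (le_refl z)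
    have q3 := e_mul_eq (F := F) hy.le (le_refl z)
    have q4 := e_mul_ne (F := F) hx.le hx.le hx.ne'
    have q5 := e_mul_ne (F := F) hx.le hy.le hy.ne'
    have q6 := e_mul_ne (F := F) hy.le hx.le hx.ne'
    have q7 := e_mul_ne (F := F) hy.le hy.le hy.ne'
    have q8 := e_mul_ne (F := F) (le_refl z) hx.le hx.ne'
    have q9 := e_mul_ne (F := F) (le_refl z) hy.le hy.ne'
    have := hid (e F z z + e F x z + e F y z)
      (by simp only [add_mul, mul_add, q1, q2, q3, q4, q5, q6, q7, q8, q9]; simp)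
    simp only [map_add] at this
    change (N z z + N x z + N y z) * (N z z + N x z + N y z) = N z z + N x z + N y z at this
    linear_combination (norm := noncomm_ring) this - Ei z - (L2' x z hx) - (L2' y z hy)
      - (L2 x z hx).2 - (L2 y z hy).2
  have J0 : ∀ x y z, x < y → y < z → N y y * N x z = 0 ∧ N x z * N y y = 0 := by
    intro x y z hx hy
    have hxz := hx.trans hy
    rcases PR x z hxz with ⟨a, b⟩ | ⟨a, b⟩
    · exact ⟨zer hx.ne' (Ei y) a, zer hy.ne' b (Ei y)⟩
    · exact ⟨zer hy.ne (Ei y) a, zer hx.ne b (Ei y)⟩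
  have J3 : ∀ x y z, x < y → y < z → N x y * N y z + N y z * N x y = N x z := by
    intro x y z hx hy
    have hxz := hx.trans hy
    have i1 : (e F y y + e F x y) * (e F y y + e F y z) = e F y y + e F x y + e F y z + e F x z := by
      simp only [add_mul, mul_add, e_mul_eq le_rfl le_rfl, e_mul_eq le_rfl hy.le,
        e_mul_eq hx.le le_rfl, e_mul_eq hx.le hy.le]
      abel
    have i2 : (e F y y + e F y z) * (e F y y + e F x y) = e F y y := by
      simp only [add_mul, mul_add, e_mul_eq le_rfl le_rfl, e_mul_ne le_rfl hx.le hx.ne',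
        e_mul_ne hy.le le_rfl hy.ne', e_mul_ne hy.le hx.le hxz.ne']
      simp
    have i3 : e F y y * (e F y y + e F y z) = e F y y + e F y z := by
      simp only [mul_add, e_mul_eq le_rfl le_rfl, e_mul_eq le_rfl hy.le]
    have := hid (e F y y + e F x y + e F y z + e F x z) (by
      rw [← i1]
      calc _ = (e F y y + e F x y) * ((e F y y + e F y z) * (e F y y + e F x y))
              * (e F y y + e F y z) := by noncomm_ring
        _ = _ := by rw [i2, mul_assoc, i3])
    simp only [map_add] at this
    change (N y y + N x y + N y z + N x z) * (N y y + N x y + N y z + N x z)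
      = N y y + N x y + N y z + N x z at this
    linear_combination (norm := noncomm_ring) this - Ei y - (L2' x y hx) - (L2 y z hy).1
      - (L2 x y hx).2 - (L2 y z hy).2 - (L2 x z hxz).2 - (J0 x y z hx hy).1 - (J0 x y z hx hy).2
      - J1 x y z hx hxz hy.ne - J2 x y z hxz hy hx.ne
  -- adjacency
  have C1 : ∀ x y z, x < y → x < z → Pr x y → Rv x z → False := by
    intro x y z hy hz hp hr
    by_cases hyz : y = z
    · subst hyz; exact nPR _ _ hy hp hr
    have j := J1 x y z hy hz hyz
    rw [zer hyz hp.2 hr.1, zero_add] at j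
    rcases K x _ _ hr.2 hp.1 j with h | h
    · exact nz _ _ hz.le h
    · exact nz _ _ hy.le h
  have C2 : ∀ x y z, x < z → y < z → Pr x z → Rv y z → False := by
    intro x y z hx hy hp hr
    by_cases hxy : x = y
    · subst hxy; exact nPR _ _ hy hp hr
    have j := J2 x y z hx hy hxy
    rw [zer (Ne.symm hxy) hr.2 hp.1, add_zero] at j
    rcases K z _ _ hp.2 hr.1 j with h | h
    · exact nz _ _ hx.le h
    · exact nz _ _ hy.le h
  have C3 : ∀ x y z, x < y → y < z → Pr x y → Rv y z → False := by
    intro x y z hx hy hp hr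
    have j := J3 x y z hx hy
    rw [zer hy.ne hp.2 hr.1, zer hx.ne' hr.2 hp.1, zero_add] at j
    exact nz _ _ (hx.trans hy).le j.symm
  have C4 : ∀ x y z, x < y → y < z → Rv x y → Pr y z → False := by
    intro x y z hx hy hr hp
    have j := J3 x y z hx hy
    rw [zer hx.ne hr.2 hp.1, zer hy.ne' hp.2 hr.1, zero_add] at j
    exact nz _ _ (hx.trans hy).le j.symm
  have D : ∀ x, ((∀ y, x < y → Pr x y) ∧ (∀ y, y < x → Pr y x)) ∨
      ((∀ y, x < y → Rv x y) ∧ (∀ y, y < x → Rv y x)) := by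
    intro x
    by_contra! hc
    obtain ⟨ha, hb⟩ := hc
    have hR : (∃ y, x < y ∧ Rv x y) ∨ (∃ y, y < x ∧ Rv y x) := by
      by_contra! h
      obtain ⟨y, hy, hn⟩ := ha fun y hy => (PR x y hy).resolve_right (h.1 y hy)
      exact h.2 y hy ((PR y x hy).resolve_left hn)
    have hP : (∃ y, x < y ∧ Pr x y) ∨ (∃ y, y < x ∧ Pr y x) := by
      by_contra! h
      obtain ⟨y, hy, hn⟩ := hb fun y hy => (PR x y hy).resolve_left (h.1 y hy)
      exact h.2 y hy ((PR y x hy).resolve_right hn)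
    rcases hR with ⟨y, hy, hr⟩ | ⟨y, hy, hr⟩ <;> rcases hP with ⟨z, hz, hp⟩ | ⟨z, hz, hp⟩
    · exact C1 _ _ _ hz hy hp hr
    · exact C3 _ _ _ hz hy hp hr
    · exact C4 _ _ _ hy hz hr hp
    · exact C2 _ _ _ hz hy hp hr
  have G : (∀ x y, x < y → Pr x y) ∨ (∀ x y, x < y → Rv x y) := by
    by_contra! hc
    obtain ⟨⟨x, y, hxy, hn⟩, ⟨u, v, huv, hm⟩⟩ := hc
    have hx : ((∀ y, x < y → Rv x y) ∧ (∀ y, y < x → Rv y x)) :=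
      (D x).resolve_left fun h => hn (h.1 y hxy)
    have hall : ∀ z, ((∀ y, z < y → Rv z y) ∧ (∀ y, y < z → Rv y z)) := by
      intro z
      induction hconn x z with
      | refl => exact hx
      | @tail b c _ h ih =>
        by_cases hbc : b = c
        · subst hbc; exact ih
        refine (D c).resolve_left fun hp => ?_
        rcases h with h | h
        · have h := lt_of_le_of_ne h hbc
          exact nPR _ _ h (hp.2 _ h) (ih.1 _ h)
        · have h := lt_of_le_of_ne h (Ne.symm hbc)
          exact nPR _ _ h (hp.1 _ h) (ih.2 _ h)
    exact hm ((hall u).1 v huv)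
  rcases G with G | G
  · left
    have G' : ∀ x y, x ≤ y → Pr x y := by
      intro x y h
      rcases h.eq_or_lt with rfl | h
      · exact ⟨Ei x, Ei x⟩
      · exact G x y h
    have B : ∀ x y u v, x ≤ y → u ≤ v → ψ (e F x y * e F u v) = N x y * N u v := by
      intro x y u v h h'
      by_cases hyu : y = u
      · subst hyu
        rw [e_mul_eq h h']
        change N x v = _
        rcases h.eq_or_lt with rfl | hl
        · exact (G' x v h').1.symm
        rcases h'.eq_or_lt with rfl | hl'
        · exact (G' x y h).2.symm
        rw [← J3 x y v hl hl', zer (hl.trans hl').ne' (G' y v h').2 (G' x y h).1, add_zero]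
      · rw [e_mul_ne h h' hyu, map_zero, zer hyu (G' x y h).2 (G' u v h').1]
    intro f
    refine ind (fun f => ∀ g, ψ (f * g) = ψ f * ψ g) ?_ ?_ ?_ ?_ f
    · simp
    · intro f f' h h' g; rw [add_mul, map_add, map_add, add_mul, h, h']
    · intro c f h g; rw [smul_mul_assoc, map_smul, map_smul, smul_mul_assoc, h]
    · intro x y h
      refine ind _ ?_ ?_ ?_ (fun u v h' => B x y u v h h')
      · simp
      · intro f f' h h'; rw [mul_add, map_add, map_add, mul_add, h, h']
      · intro c f h; rw [mul_smul_comm, map_smul, map_smul, mul_smul_comm, h]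
  · right
    have G' : ∀ x y, x ≤ y → Rv x y := by
      intro x y h
      rcases h.eq_or_lt with rfl | h
      · exact ⟨Ei x, Ei x⟩
      · exact G x y h
    have B : ∀ x y u v, x ≤ y → u ≤ v → ψ (e F x y * e F u v) = N u v * N x y := by
      intro x y u v h h'
      by_cases hyu : y = u
      · subst hyu
        rw [e_mul_eq h h']
        change N x v = _
        rcases h.eq_or_lt with rfl | hl
        · exact (G' x v h').2.symm
        rcases h'.eq_or_lt with rfl | hl'
        · exact (G' x y h).1.symm
        rw [← J3 x y v hl hl', zer (hl.trans hl').ne (G' x y h).2 (G' y v h').1, zero_add]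
      · rw [e_mul_ne h h' hyu, map_zero, zer (Ne.symm hyu) (G' u v h').2 (G' x y h).1]
    intro f
    refine ind (fun f => ∀ g, ψ (f * g) = ψ g * ψ f) ?_ ?_ ?_ ?_ f
    · simp
    · intro f f' h h' g; rw [add_mul, map_add, map_add, mul_add, h, h']
    · intro c f h g; rw [smul_mul_assoc, map_smul, map_smul, mul_smul_comm, h]
    · intro x y h
      refine ind _ ?_ ?_ ?_ (fun u v h' => B x y u v h h')
      · simp
      · intro f f' h h'; rw [mul_add, map_add, map_add, add_mul, h, h']
      · intro c f h; rw [mul_smul_comm, map_smul, map_smul, smul_mul_assoc, h]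

end Trip

/-- over a field of characteristic `∉ {2,3}`, every bijective linear tripotent
preserver of the incidence algebra of a finite connected poset is `r·ψ` with `r ∈ {−1,1}` and
`ψ` an automorphism or anti-automorphism. -/
theorem stmt_16 {X : Type*} [PartialOrder X] [Fintype X] [LocallyFiniteOrder X] [DecidableEq X]
    {F : Type*} [Field F] (h2 : ringChar F ≠ 2) (h3 : ringChar F ≠ 3)
    (hconn : PosetConnected X)
    (φ : IncidenceAlgebra F X →ₗ[F] IncidenceAlgebra F X)
    (hbij : Function.Bijective φ)
    (htri : ∀ f : IncidenceAlgebra F X, f ^ 3 = f → (φ f) ^ 3 = φ f) :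
    ∃ (r : F) (ψ : IncidenceAlgebra F X →ₗ[F] IncidenceAlgebra F X),
      (r = 1 ∨ r = -1) ∧ Function.Bijective ψ ∧
      ((∀ f g : IncidenceAlgebra F X, ψ (f * g) = ψ f * ψ g) ∨
        (∀ f g : IncidenceAlgebra F X, ψ (f * g) = ψ g * ψ f)) ∧
      φ = r • ψ := by
  classical
  have t2 : (2 : F) ≠ 0 := Ring.two_ne_zero h2
  have t3 : (3 : F) ≠ 0 := by
    intro h
    have hd : ringChar F ∣ 3 := (ringChar.spec F 3).1 (by exact_mod_cast h)
    rcases (Nat.dvd_prime Nat.prime_three).1 hd with h' | h'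
    · have : ((1 : ℕ) : F) = 0 := (ringChar.spec F 1).2 (by rw [h'])
      simp at this
    · exact h3 h'
  have a2 : ∀ a : IncidenceAlgebra F X, a + a = 0 → a = 0 := by
    intro a h
    rw [← two_smul F] at h
    exact (smul_eq_zero.1 h).resolve_left t2
  have a3 : ∀ a : IncidenceAlgebra F X, a + a + a = 0 → a = 0 := by
    intro a h
    have : (3 : F) • a = 0 := by
      rw [← h, show (3 : F) = 1 + 1 + 1 by norm_num, add_smul, add_smul, one_smul]
    exact (smul_eq_zero.1 this).resolve_left t3
  have orth : ∀ f g : IncidenceAlgebra F X, f * f = f → g * g = g → f * g = 0 → g * f = 0 →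
      φ f * φ g = 0 := by
    intro f g hf hg hfg hgf
    apply Trip.orth_of_trip a2 a3
    · exact htri f (by rw [pow_succ, pow_two, hf, hf])
    · exact htri g (by rw [pow_succ, pow_two, hg, hg])
    · rw [← map_add]
      refine htri _ ?_
      have : (f + g) * (f + g) = f + g := by
        simp only [mul_add, add_mul, hf, hg, hfg, hgf]; simp
      rw [pow_succ, pow_two, this, this]
    · rw [← map_sub]
      refine htri _ ?_
      have : (f - g) * (f - g) = f + g := by
        simp only [mul_sub, sub_mul, hf, hg, hfg, hgf]; simp
      rw [pow_succ, pow_two, this]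
      simp only [mul_sub, add_mul, hf, hg, hfg, hgf]; simp
  have idem : ∀ f : IncidenceAlgebra F X, f * f = f →
      φ f * φ 1 = φ f * φ f ∧ φ 1 * φ f = φ f * φ f := by
    intro f hf
    have q : (1 - f) * (1 - f) = 1 - f := by
      simp only [mul_sub, sub_mul, hf]; simp
    have q1 : f * (1 - f) = 0 := by simp only [mul_sub, hf]; simp
    have q2 : (1 - f) * f = 0 := by simp only [sub_mul, hf]; simp
    have o1 := orth f (1 - f) hf q q1 q2
    have o2 := orth (1 - f) f q hf q2 q1
    rw [map_sub, mul_sub, sub_eq_zero] at o1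
    rw [map_sub, sub_mul, sub_eq_zero] at o2
    exact ⟨o1, o2⟩
  have cen : ∀ g, φ 1 * g = g * φ 1 := by
    intro g
    obtain ⟨f, rfl⟩ := hbij.2 g
    refine Trip.ind (fun f => φ 1 * φ f = φ f * φ 1) ?_ ?_ ?_ ?_ f
    · simp
    · intro f f' h h'; rw [map_add, mul_add, add_mul, h, h']
    · intro c f h; rw [map_smul, mul_smul_comm, smul_mul_assoc, h]
    · intro x y h
      have hd : ∀ f : IncidenceAlgebra F X, f * f = f → φ 1 * φ f = φ f * φ 1 := fun f hf => by
        rw [(idem f hf).1, (idem f hf).2]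
      have e1 := Trip.e_mul_eq (F := F) (le_refl x) (le_refl x)
      rcases h.eq_or_lt with rfl | hl
      · exact hd _ e1
      · have := hd (Trip.e F x x + Trip.e F x y) (by
          simp only [add_mul, mul_add, e1, Trip.e_mul_eq le_rfl h, Trip.e_mul_ne h h hl.ne',
            Trip.e_mul_ne h (le_refl x) hl.ne']
          simp)
        rw [map_add, mul_add, add_mul, hd _ e1] at this
        exact add_left_cancel this
  obtain ⟨c, hc⟩ := Trip.central hconn (φ 1) cen
  by_cases htriv : (1 : IncidenceAlgebra F X) = 0
  · have hs : ∀ f : IncidenceAlgebra F X, f = 0 := fun f => by rw [← one_mul f, htriv, zero_mul]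
    refine ⟨1, φ, Or.inl rfl, hbij, Or.inl fun f g => ?_, (one_smul _ _).symm⟩
    rw [hs (φ (f * g)), hs (φ f * φ g)]
  have hc0 : c ≠ 0 := by
    rintro rfl
    rw [zero_smul] at hc
    exact htriv (hbij.1 (by rw [hc, map_zero]))
  have hcc : c * c = 1 := by
    have h := htri 1 (one_pow 3)
    rw [hc, smul_pow, one_pow] at h
    have h' : (c ^ 3 - c) • (1 : IncidenceAlgebra F X) = 0 := by rw [sub_smul, h, sub_self]
    have h'' := (smul_eq_zero.1 h').resolve_right htriv
    apply mul_left_cancel₀ hc0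
    linear_combination h''
  refine ⟨c, c • φ, mul_self_eq_one_iff.1 hcc, ?_, ?_, ?_⟩
  · constructor
    · intro f g h
      exact hbij.1 (smul_right_injective _ hc0 h)
    · intro g
      obtain ⟨f, hf⟩ := hbij.2 (c • g)
      exact ⟨f, by rw [LinearMap.smul_apply, hf, smul_smul, hcc, one_smul]⟩
  · apply Trip.jordan a2 hconn
    · intro f g h
      exact hbij.1 (smul_right_injective _ hc0 h)
    · rw [LinearMap.smul_apply, hc, smul_smul, hcc, one_smul]
    · intro f hf
      have := (idem f hf).1
      rw [hc, mul_smul_comm, mul_one] at this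
      rw [LinearMap.smul_apply, smul_mul_smul_comm, hcc, one_smul, this]
    · intro f g hf hg h h'
      rw [LinearMap.smul_apply, LinearMap.smul_apply, smul_mul_smul_comm, orth f g hf hg h h',
        smul_zero]
  · rw [smul_smul, hcc, one_smul]
end

section
/- Let k ≥ 3 be an integer, X a finite connected poset, and F a field admitting a primitive (k−1)-th root of unity and such that char(F) does not divide k. Then every bijective F-linear map φ: I(X,F) → I(X,F) that preserves k-potents (φ(f)^k = φ(f) whenever f^k = f) is of the form φ = r·ψ, where r ∈ F satisfies r^{k−1} = 1 and ψ is either an automorphism or an anti-automorphism of I(X,F). -/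
open IncidenceAlgebra

lemma aux_vdm {F V : Type*} [Field F] [AddCommGroup V] [Module F V] (n : ℕ) (s : ℕ → V)
    (w : Fin n → F) (hw : Function.Injective w)
    (h : ∀ i, ∑ j ∈ Finset.range n, w i ^ j • s j = 0) : ∀ j < n, s j = 0 := by
  intro j hj
  rw [← Module.forall_dual_apply_eq_zero_iff F]
  intro g
  set q : Polynomial F := ∑ j ∈ Finset.range n, Polynomial.C (g (s j)) * Polynomial.X ^ j with hq
  have hdeg : q.natDegree < n := by
    refine lt_of_le_of_lt (Polynomial.natDegree_sum_le_of_forall_le (n := n - 1) _ _ ?_) (by omega)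
    intro i hi
    rw [Finset.mem_range] at hi
    exact (Polynomial.natDegree_C_mul_X_pow_le _ _).trans (by omega)
  have h0 : q = 0 := by
    apply Polynomial.eq_zero_of_natDegree_lt_card_of_eval_eq_zero q hw
    · intro i
      have := congrArg g (h i)
      rw [map_sum, map_zero] at this
      rw [hq, Polynomial.eval_finsetSum, ← this]
      refine Finset.sum_congr rfl fun j _ => ?_
      rw [Polynomial.eval_mul, Polynomial.eval_C, Polynomial.eval_pow, Polynomial.eval_X, map_smul,
        smul_eq_mul, mul_comm]
    · simpa using hdeg
  have : q.coeff j = g (s j) := by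
    rw [hq, Polynomial.finsetSum_coeff]
    simp [Polynomial.coeff_C_mul, Polynomial.coeff_X_pow, hj]
  rw [← this, h0]; simp

lemma aux_orth {F A : Type*} [Field F] [Ring A] [Algebra F A] (k : ℕ) (hk : 3 ≤ k)
    (ε : F) (h1 : ε ^ (k - 1) = 1) (h2 : ∀ m : ℕ, 0 < m → m < k - 1 → ε ^ m ≠ 1)
    (hkF : (k : F) ≠ 0) (a b : A) (ha : a ^ k = a) (hb : b ^ k = b)
    (hab : ∀ ω : F, ω ^ (k - 1) = 1 → (a + ω • b) ^ k = a + ω • b) : a * b = 0 ∧ b * a = 0 := by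
  have hε : ε ≠ 0 := by
    rintro rfl
    rw [zero_pow (by omega)] at h1
    exact zero_ne_one h1
  have hprim : IsPrimitiveRoot ε (k - 1) := by
    refine IsPrimitiveRoot.mk_of_lt ε (by omega) h1 h2
  set p : Polynomial A := Polynomial.C a + Polynomial.C b * Polynomial.X with hp
  have hpd : p.natDegree ≤ 1 := by
    rw [hp]; compute_degree
  have hc0 : ∀ n, (p ^ n).coeff 0 = a ^ n := by
    intro n
    induction n with
    | zero => simp
    | succ n ih => rw [pow_succ, pow_succ, Polynomial.mul_coeff_zero, ih]; simp [hp]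
  have hck : (p ^ k).coeff k = b ^ k := by
    have := Polynomial.coeff_pow_of_natDegree_le (m := k) hpd
    rw [mul_one] at this
    rw [this]; simp [hp]
  have hkd : (p ^ k).natDegree < k + 1 := by
    have := Polynomial.natDegree_pow_le_of_le k hpd
    omega
  have hrec : ∀ n, (p ^ (n+1)).coeff 1 = a * (p ^ n).coeff 1 + b * a ^ n := by
    intro n
    rw [pow_succ', hp, add_mul, Polynomial.coeff_add, ← hp, Polynomial.coeff_C_mul, mul_assoc,
      Polynomial.coeff_C_mul, Polynomial.coeff_X_mul, hc0]
  have hrec' : ∀ n, (p ^ (n+1)).coeff 1 = (p ^ n).coeff 1 * a + a ^ n * b := by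
    intro n
    rw [pow_succ, hp, mul_add, Polynomial.coeff_add, ← hp, Polynomial.coeff_mul_C, ← mul_assoc,
      Polynomial.coeff_mul_X, Polynomial.coeff_mul_C, hc0]
  have hev : ∀ ω : F, ∑ j ∈ Finset.range (k+1), ω ^ j • (p ^ k).coeff j = (a + ω • b) ^ k := by
    intro ω
    have hcomm : ∀ x : A, Commute (RingHom.id A x) (algebraMap F A ω) :=
      fun x => (Algebra.commutes ω x).symm
    have e1 : Polynomial.eval₂RingHom' (RingHom.id A) (algebraMap F A ω) hcomm (p ^ k)
        = (a + ω • b) ^ k := by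
      rw [map_pow]
      congr 1
      rw [hp, map_add, map_mul]
      simp [Polynomial.eval₂RingHom', Algebra.smul_def, Algebra.commutes]
    rw [← e1]
    change _ = Polynomial.eval₂ (RingHom.id A) (algebraMap F A ω) (p ^ k)
    rw [Polynomial.eval₂_eq_sum_range' _ hkd]
    refine Finset.sum_congr rfl fun j _ => ?_
    rw [Algebra.smul_def, RingHom.id_apply, ← map_pow, Algebra.commutes]
  have hz : (p ^ k).coeff 1 = 0 := by
    refine aux_vdm (F := F) (k - 1) (fun j => (p ^ k).coeff (j + 1)) (fun i => ε ^ (i : ℕ))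
      ?_ ?_ 0 (by omega)
    · intro i j hij
      exact Fin.ext (hprim.pow_inj i.2 j.2 hij)
    · intro i
      set ω := ε ^ (i : ℕ) with hω
      have hω1 : ω ^ (k - 1) = 1 := by rw [hω, ← pow_mul, mul_comm, pow_mul, h1, one_pow]
      have hωk : ω ^ k = ω := by
        obtain ⟨m, rfl⟩ : ∃ m, k = m + 1 := ⟨k - 1, by omega⟩
        rw [pow_succ]; simp at hω1; rw [hω1, one_mul]
      have hω0 : ω ≠ 0 := pow_ne_zero _ hε
      have := hev ω
      rw [hab ω hω1, Finset.sum_range_succ, hck, hb, hωk] at this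
      have h3 : ∑ j ∈ Finset.range k, ω ^ j • (p ^ k).coeff j = a := add_right_cancel this
      obtain ⟨m, rfl⟩ : ∃ m, k = m + 1 := ⟨k - 1, by omega⟩
      rw [Finset.sum_range_succ', hc0, ha] at h3
      simp only [pow_zero, one_smul, add_eq_right] at h3
      have h4 : ω • ∑ j ∈ Finset.range m, ω ^ j • (p ^ (m+1)).coeff (j + 1) = 0 := by
        rw [← h3, Finset.smul_sum]
        refine Finset.sum_congr rfl fun j _ => ?_
        rw [smul_smul, ← pow_succ' ω]
      simpa using (smul_eq_zero.1 h4).resolve_left hω0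
  have hcomm : a * b = b * a := by
    have e1 := hrec k
    rw [hrec' k, hz, ha] at e1
    simpa using e1
  have hform : ∀ n, (p ^ (n+1)).coeff 1 = ((n + 1 : ℕ) : F) • (a ^ n * b) := by
    intro n
    induction n with
    | zero => simp [hp]
    | succ n ih =>
      have hc : Commute b (a ^ (n+1)) := (Commute.pow_right hcomm.symm (n+1))
      rw [hrec, ih, hc.eq, mul_smul_comm, ← mul_assoc, ← pow_succ',
        Nat.cast_succ (n+1), add_smul, one_smul]
  have hfin : a ^ (k-1) * b = 0 := by
    have := hform (k-1)
    rw [Nat.sub_add_cancel (by omega), hz] at this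
    exact (smul_eq_zero.1 this.symm).resolve_left hkF
  have : a * b = 0 := by
    rw [← ha, ← Nat.sub_add_cancel (show 1 ≤ k by omega), pow_succ', mul_assoc, hfin, mul_zero]
  exact ⟨this, hcomm ▸ this⟩

lemma aux_two {F : Type*} [Field F] (k : ℕ) (hk : 3 ≤ k)
    (ε : F) (h1 : ε ^ (k - 1) = 1) (h2 : ∀ m : ℕ, 0 < m → m < k - 1 → ε ^ m ≠ 1)
    (hkF : (k : F) ≠ 0) : (2 : F) ≠ 0 := by
  intro h
  rcases Nat.even_or_odd' k with ⟨m, rfl | rfl⟩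
  · apply hkF; push_cast; rw [h, zero_mul]
  · have e : (ε ^ m - 1) ^ 2 = 0 := by
      have : ε ^ (2 * m) = 1 := by simpa using h1
      have e2 : (ε ^ m) ^ 2 = 1 := by rw [← pow_mul, mul_comm, this]
      linear_combination e2 + (1 - ε ^ m) * h
    have := pow_eq_zero_iff (two_ne_zero) |>.1 e
    exact h2 m (by omega) (by omega) (sub_eq_zero.1 this)
section inc
set_option linter.unusedSectionVars false
variable {X : Type*} [PartialOrder X] [Fintype X] [LocallyFiniteOrder X] [DecidableEq X]
    {F : Type*} [Field F]

lemma aux_mul_apply (f g : IncidenceAlgebra F X) (a b : X) :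
    (f * g) a b = ∑ z : X, f a z * g z b := by
  rw [mul_apply]
  refine Finset.sum_subset (Finset.subset_univ _) fun z _ hz => ?_
  rw [Finset.mem_Icc, not_and_or] at hz
  rcases hz with h | h
  · rw [apply_eq_zero_of_not_le h, zero_mul]
  · rw [apply_eq_zero_of_not_le h, mul_zero]

open Classical in
/-- matrix unit -/
noncomputable def sg (F : Type*) {X : Type*} [PartialOrder X] [Field F] (x y : X) :
    IncidenceAlgebra F X :=
  ⟨fun a b => if a = x ∧ b = y ∧ x ≤ y then 1 else 0, by
    intro a b h
    rw [if_neg]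
    rintro ⟨rfl, rfl, h'⟩
    exact h h'⟩

lemma sg_apply {x y : X} (h : x ≤ y) (a b : X) :
    sg F x y a b = if a = x ∧ b = y then 1 else 0 := by
  simp [sg, h]

lemma sg_mul {x y u v : X} (h : x ≤ y) (h' : u ≤ v) :
    sg F x y * sg F u v = if y = u then sg F x v else 0 := by
  ext a b hab
  rw [aux_mul_apply]
  by_cases hyu : y = u
  · subst hyu
    simp only [sg_apply h, sg_apply h', if_true, sg_apply (h.trans h')]
    rw [Finset.sum_eq_single y]
    · by_cases h1 : a = x <;> by_cases h2 : b = v <;> simp [h1, h2]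
    · intro z _ hz; simp [hz]
    · simp
  · simp only [sg_apply h, sg_apply h', if_neg hyu, IncidenceAlgebra.zero_apply]
    refine Finset.sum_eq_zero fun z _ => ?_
    by_cases h1 : z = y
    · subst h1; simp [hyu]
    · simp [h1]

lemma sg_same {x y v : X} (h : x ≤ y) (h' : y ≤ v) : sg F x y * sg F y v = sg F x v := by
  rw [sg_mul h h', if_pos rfl]

lemma sg_diff {x y u v : X} (h : x ≤ y) (h' : u ≤ v) (hyu : y ≠ u) :
    sg F x y * sg F u v = 0 := by
  rw [sg_mul h h', if_neg hyu]

lemma sg_ne {x y : X} (h : x ≤ y) : sg F x y ≠ 0 := by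
  intro h0
  have := congrArg (fun f : IncidenceAlgebra F X => f x y) h0
  simp [sg_apply h] at this

lemma sum_apply' {ι : Type*} (s : Finset ι) (f : ι → IncidenceAlgebra F X) (a b : X) :
    (∑ i ∈ s, f i) a b = ∑ i ∈ s, f i a b := by
  classical
  induction s using Finset.induction_on with
  | empty => simp
  | insert i s hi ih => rw [Finset.sum_insert hi, Finset.sum_insert hi, IncidenceAlgebra.add_apply, ih]

lemma sg_expand (f : IncidenceAlgebra F X) : f = ∑ x : X, ∑ y : X, f x y • sg F x y := by
  ext a b hab
  rw [sum_apply', Finset.sum_eq_single a, sum_apply', Finset.sum_eq_single b]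
  · simp [sg_apply hab]
  · intro y _ hy
    rw [constSMul_apply]; simp [sg, hy.symm]
  · simp
  · intro x _ hx
    rw [sum_apply']
    refine Finset.sum_eq_zero fun y _ => ?_
    rw [constSMul_apply]; simp [sg, hx.symm]
  · simp

lemma sg_one : (1 : IncidenceAlgebra F X) = ∑ x : X, sg F x x := by
  ext a b hab
  rw [sum_apply', one_apply]
  simp only [sg_apply le_rfl]
  by_cases h : a = b
  · subst h; simp
  · rw [if_neg h]; symm; apply Finset.sum_eq_zero; rintro x -; rw [if_neg]; rintro ⟨rfl, rfl⟩; exact h rfl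

lemma aux_ne_mul (b : X) (f g : IncidenceAlgebra F X) (hf : f * sg F b b ≠ 0)
    (hg : sg F b b * g ≠ 0) : f * sg F b b * g ≠ 0 := by
  have e1 : ∀ s t, (f * sg F b b) s t = if t = b then f s b else 0 := by
    intro s t
    rw [aux_mul_apply]
    simp only [sg_apply le_rfl]
    by_cases h : t = b <;> simp [h]
  have e2 : ∀ s t, (sg F b b * g) s t = if s = b then g b t else 0 := by
    intro s t
    rw [aux_mul_apply]
    simp only [sg_apply le_rfl]
    by_cases h : s = b <;> simp [h]
  obtain ⟨s, hs⟩ : ∃ s, f s b ≠ 0 := by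
    by_contra! h
    apply hf; ext s t _; rw [e1]; simp [h]
  obtain ⟨t, ht⟩ : ∃ t, g b t ≠ 0 := by
    by_contra! h
    apply hg; ext s t _; rw [e2]; simp [h]
  intro h
  have := congrArg (fun f : IncidenceAlgebra F X => f s t) h
  simp only [IncidenceAlgebra.zero_apply] at this
  rw [aux_mul_apply] at this
  simp only [e1] at this
  simp [hs, ht] at this

/-- multiplicativity from matrix-unit relations -/
lemma aux_mult {A : Type*} [Ring A] [Algebra F A] (ψ : IncidenceAlgebra F X →ₗ[F] A)
    (hO : ∀ x y : X, x ≠ y → ψ (sg F x x) * ψ (sg F y y) = 0)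
    (hI : ∀ x : X, ψ (sg F x x) * ψ (sg F x x) = ψ (sg F x x))
    (hM : ∀ x y : X, x < y → ψ (sg F x x) * ψ (sg F x y) * ψ (sg F y y) = ψ (sg F x y))
    (hT : ∀ x y z : X, x < y → y < z → ψ (sg F x y) * ψ (sg F y z) = ψ (sg F x z))
    (f g : IncidenceAlgebra F X) : ψ (f * g) = ψ f * ψ g := by
  have hM' : ∀ x y : X, x ≤ y → ψ (sg F x x) * ψ (sg F x y) * ψ (sg F y y) = ψ (sg F x y) := by
    intro x y h
    rcases h.eq_or_lt with rfl | h
    · rw [hI, hI]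
    · exact hM x y h
  have hL : ∀ x y : X, x ≤ y → ψ (sg F x x) * ψ (sg F x y) = ψ (sg F x y) := by
    intro x y h
    rw [← hM' x y h, ← mul_assoc, ← mul_assoc, hI]
  have hR : ∀ x y : X, x ≤ y → ψ (sg F x y) * ψ (sg F y y) = ψ (sg F x y) := by
    intro x y h
    rw [← hM' x y h, mul_assoc, hI]
  have key : ∀ x y u v : X, x ≤ y → u ≤ v →
      ψ (sg F x y * sg F u v) = ψ (sg F x y) * ψ (sg F u v) := by
    intro x y u v h h'
    by_cases hyu : y = u
    · subst hyu
      rw [sg_same h h']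
      rcases h.eq_or_lt with rfl | h
      · rw [hL _ _ h']
      rcases h'.eq_or_lt with rfl | h'
      · rw [hR _ _ h.le]
      rw [hT _ _ _ h h']
    · rw [sg_diff h h' hyu, map_zero, ← hR x y h, ← hL u v h', mul_assoc, ← mul_assoc _ (ψ (sg F u u)),
        hO _ _ hyu, zero_mul, mul_zero]
  have key' : ∀ x y u v : X, 
      ψ ((f x y • sg F x y) * (g u v • sg F u v)) = ψ (f x y • sg F x y) * ψ (g u v • sg F u v) := by
    intro x y u v
    by_cases h : x ≤ y
    · by_cases h' : u ≤ v
      · simp only [smul_mul_assoc, mul_smul_comm, map_smul, key x y u v h h']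
      · simp [apply_eq_zero_of_not_le h']
    · simp [apply_eq_zero_of_not_le h]
  conv_lhs => rw [sg_expand f, sg_expand g]
  conv_rhs => rw [sg_expand f, sg_expand g]
  simp only [Finset.sum_mul, Finset.mul_sum, map_sum, key']

lemma aux_conn (hconn : PosetConnected X) (T : X → X → Prop)
    (h1 : ∀ x y z, x < y → y < z → (T x y ↔ T y z))
    (h2 : ∀ x y v, x < v → y < v → (T x v ↔ T y v))
    (h3 : ∀ x y v, v < x → v < y → (T v x ↔ T v y)) :
    (∀ x y, x < y → T x y) ∨ (∀ x y, x < y → ¬ T x y) := by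
  by_cases h : ∀ x y, x < y → ¬ T x y
  · exact Or.inr h
  left
  push Not at h
  obtain ⟨a, b, hab, hT⟩ := h
  have key : ∀ v, (∀ w, (v < w → T v w) ∧ (w < v → T w v)) := by
    intro v
    induction hconn a v with
    | refl =>
      intro w
      exact ⟨fun h => (h3 _ _ _ hab h).1 hT, fun h => (h1 _ _ _ h hab).2 hT⟩
    | @tail c d _ hcd ih =>
      intro w
      by_cases e : c = d
      · subst e; exact ih w
      rcases hcd with hcd | hcd
      · have hl := lt_of_le_of_ne hcd e
        have := (ih d).1 hl
        exact ⟨fun h => (h1 _ _ _ hl h).1 this, fun h => (h2 _ _ _ hl h).1 this⟩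
      · have hl := lt_of_le_of_ne hcd (Ne.symm e)
        have := (ih d).2 hl
        exact ⟨fun h => (h3 _ _ _ hl h).1 this, fun h => (h1 _ _ _ h hl).2 this⟩
  exact fun x y h => (key x y).1 h

end inc
section jor
set_option linter.unusedSectionVars false
variable {X : Type*} [PartialOrder X] [Fintype X] [LocallyFiniteOrder X] [DecidableEq X]
    {F : Type*} [Field F]

lemma aux_half {V : Type*} [AddCommGroup V] [Module F V] (h2 : (2 : F) ≠ 0) {a b : V}
    (h : a + a = b + b) : a = b := by
  rw [← two_smul F, ← two_smul F] at h
  exact smul_right_injective V h2 h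

lemma aux_jordan (h2 : (2 : F) ≠ 0) (hconn : PosetConnected X)
    (ψ : IncidenceAlgebra F X →ₗ[F] IncidenceAlgebra F X) (hbij : Function.Bijective ψ)
    (h1 : ψ 1 = 1) (hid : ∀ e, e * e = e → ψ e * ψ e = ψ e)
    (horth : ∀ e f, e * e = e → f * f = f → e * f = 0 → f * e = 0 → ψ e * ψ f = 0) :
    (∀ f g : IncidenceAlgebra F X, ψ (f * g) = ψ f * ψ g) ∨
        (∀ f g : IncidenceAlgebra F X, ψ (f * g) = ψ g * ψ f) := by
  obtain ⟨E, hE⟩ : ∃ E : X → IncidenceAlgebra F X, ∀ x, E x = ψ (sg F x x) := ⟨_, fun _ => rfl⟩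
  obtain ⟨M, hM⟩ : ∃ M : X → X → IncidenceAlgebra F X, ∀ x y, M x y = ψ (sg F x y) :=
    ⟨_, fun _ _ => rfl⟩
  have hME : ∀ x, M x x = E x := fun x => by rw [hM, hE]
  have hEE : ∀ x, E x * E x = E x := by
    intro x; rw [hE]; exact hid _ (sg_same le_rfl le_rfl)
  have hEO : ∀ x y, x ≠ y → E x * E y = 0 := by
    intro x y h; rw [hE, hE]
    exact horth _ _ (sg_same le_rfl le_rfl) (sg_same le_rfl le_rfl)
      (sg_diff le_rfl le_rfl h) (sg_diff le_rfl le_rfl h.symm)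
  have hM0 : ∀ x y, x ≤ y → M x y ≠ 0 := by
    intro x y h h0
    rw [hM] at h0
    exact sg_ne h (hbij.1 (h0.trans (map_zero ψ).symm))
  -- Jordan relations
  have gen : ∀ e m : IncidenceAlgebra F X, e * e = e → e * m + m * e = m → m * m = 0 →
      ψ e * ψ m + ψ m * ψ e = ψ m ∧ ψ m * ψ m = 0 := by
    intro e m he hem hmm
    have i0 := hid e he
    have i1 := hid (e + m) (by
      rw [add_mul, mul_add, mul_add, he, hmm, add_zero, add_assoc, hem])
    have i2 := hid (e - m) (by
      have : (e - m) * (e - m) = e * e - (e * m + m * e) + m * m := by noncomm_ring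
      rw [this, he, hem, hmm, add_zero])
    rw [map_add] at i1
    rw [map_sub] at i2
    have e1 : (ψ e * ψ m + ψ m * ψ e) + (ψ e * ψ m + ψ m * ψ e)
        = (ψ e + ψ m) * (ψ e + ψ m) - (ψ e - ψ m) * (ψ e - ψ m) := by noncomm_ring
    rw [i1, i2] at e1
    have e2 : ψ e * ψ m + ψ m * ψ e = ψ m := by
      apply aux_half h2; rw [e1]; abel
    refine ⟨e2, ?_⟩
    have e3 : (ψ e + ψ m) * (ψ e + ψ m) = ψ e * ψ e + (ψ e * ψ m + ψ m * ψ e) + ψ m * ψ m := by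
      noncomm_ring
    rw [i1, i0, e2] at e3
    simpa using e3
  have hxr : ∀ x y, x < y → E x * M x y + M x y * E x = M x y ∧ M x y * M x y = 0 := by
    intro x y h
    rw [hE, hM]
    refine gen _ _ (sg_same le_rfl le_rfl) ?_ (sg_diff h.le h.le h.ne')
    rw [sg_same le_rfl h.le, sg_diff h.le le_rfl h.ne', add_zero]
  have hyr : ∀ x y, x < y → E y * M x y + M x y * E y = M x y ∧ M x y * M x y = 0 := by
    intro x y h
    rw [hE, hM]
    refine gen _ _ (sg_same le_rfl le_rfl) ?_ (sg_diff h.le h.le h.ne')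
    rw [sg_same h.le le_rfl, sg_diff le_rfl h.le h.ne', zero_add]
  have hdec : ∀ x y, x < y → M x y = E x * M x y * E y + E y * M x y * E x := by
    intro x y h
    have e1 : E x * M x y = E x * M x y * E y := by
      conv_lhs => rw [← (hyr x y h).1]
      rw [mul_add, ← mul_assoc, hEO _ _ h.ne, zero_mul, zero_add, mul_assoc]
    have e2 : M x y * E x = E y * M x y * E x := by
      conv_lhs => rw [← (hyr x y h).1]
      rw [add_mul, mul_assoc (M x y), hEO _ _ h.ne', mul_zero, add_zero]
    rw [← e1, ← e2, (hxr x y h).1]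
  have hoff : ∀ p q u v, u ≤ v → ¬ (p = u ∧ q = v) → ¬ (p = v ∧ q = u) →
      E p * M u v * E q = 0 := by
    intro p q u v huv n1 n2
    have z : ∀ (a b : X) (m : IncidenceAlgebra F X), ¬ (p = a ∧ q = b) →
        E p * (E a * m * E b) * E q = 0 := by
      intro a b m n
      by_cases hp : p = a
      · have hq : b ≠ q := fun h => n ⟨hp, h.symm⟩
        rw [mul_assoc, mul_assoc (E a * m), hEO _ _ hq, mul_zero, mul_zero]
      · rw [← mul_assoc, ← mul_assoc, hEO _ _ hp]; simp
    rcases huv.eq_or_lt with rfl | h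
    · have := z u u (E u) n1
      rwa [hEE, hEE, ← hME u] at this
    · rw [hdec u v h, mul_add, add_mul, z _ _ _ n1, z _ _ _ n2, add_zero]
  have hcomp : ∀ (p q x y : X) (a : IncidenceAlgebra F X),
      (∀ u v, u ≤ v → ¬ (u = x ∧ v = y) → E p * M u v * E q = 0) →
      E p * ψ a * E q = a x y • (E p * M x y * E q) := by
    intro p q x y a h
    have hz : ∀ u v, ¬ (u = x ∧ v = y) → E p * (a u v • M u v) * E q = 0 := by
      intro u v n
      by_cases huv : u ≤ v
      · rw [mul_smul_comm, smul_mul_assoc, h u v huv n, smul_zero]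
      · rw [apply_eq_zero_of_not_le huv]; simp
    have ea : ψ a = ∑ u : X, ∑ v : X, a u v • M u v := by
      conv_lhs => rw [sg_expand a]
      simp only [map_sum, map_smul, hM]
    rw [ea]
    simp only [Finset.mul_sum, Finset.sum_mul]
    rw [Finset.sum_eq_single x, Finset.sum_eq_single y]
    · rw [mul_smul_comm, smul_mul_assoc]
    · intro v _ hv; exact hz _ _ (fun h => hv h.2)
    · simp
    · intro u _ hu
      exact Finset.sum_eq_zero fun v _ => hz _ _ (fun h => hu h.1)
    · simp
  have hdich : ∀ x y, x < y → E x * M x y * E y = 0 ∨ E y * M x y * E x = 0 := by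
    intro x y h
    obtain ⟨a, ha⟩ := hbij.2 (E x * M x y * E y)
    have c1 := hcomp x y x y a (fun u v huv n => hoff _ _ _ _ huv
      (fun h => n ⟨h.1.symm, h.2.symm⟩) (by rintro ⟨rfl, rfl⟩; exact absurd huv h.not_ge))
    have c2 := hcomp y x x y a (fun u v huv n => hoff _ _ _ _ huv
      (by rintro ⟨rfl, rfl⟩; exact absurd huv h.not_ge) (fun h => n ⟨h.2.symm, h.1.symm⟩))
    have e1 : E x * (E x * M x y * E y) * E y = E x * M x y * E y := by
      rw [mul_assoc (E x), mul_assoc (E x * _), hEE, ← mul_assoc, ← mul_assoc, hEE]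
    have e2 : E y * (E x * M x y * E y) * E x = 0 := by
      rw [← mul_assoc, ← mul_assoc, hEO _ _ h.ne']; simp
    rw [ha, e1] at c1
    rw [ha, e2] at c2
    rcases smul_eq_zero.1 c2.symm with h0 | h0
    · left; rw [c1, h0, zero_smul]
    · exact Or.inr h0
  -- primitivity
  have hprod : ∀ (v : X) (f g : IncidenceAlgebra F X), f * E v = f → E v * g = g → f ≠ 0 → g ≠ 0 →
      f * g ≠ 0 := by
    intro v f g hf hg hf0 hg0
    have hEv : E v ≠ 0 := by rw [← hME]; exact hM0 _ _ le_rfl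
    obtain ⟨b, hb⟩ : ∃ b, E v * sg F b b * E v ≠ 0 := by
      by_contra! hall
      apply hEv
      have : E v * 1 * E v = 0 := by
        rw [sg_one, Finset.mul_sum, Finset.sum_mul]
        exact Finset.sum_eq_zero fun b _ => hall b
      rwa [mul_one, hEE] at this
    obtain ⟨a, ha⟩ := hbij.2 (sg F b b)
    have c1 := hcomp v v v v a (fun u w huw n => hoff _ _ _ _ huw
      (fun h => n ⟨h.1.symm, h.2.symm⟩) (fun h => n ⟨h.2.symm, h.1.symm⟩))
    rw [ha, hME, hEE, hEE] at c1
    have hc : a v v ≠ 0 := by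
      intro h; rw [c1, h, zero_smul] at hb; exact hb rfl
    have f1 : f * sg F b b ≠ 0 := by
      intro h
      have : f * (E v * sg F b b * E v) = 0 := by
        rw [← mul_assoc, ← mul_assoc, hf, h, zero_mul]
      rw [c1, mul_smul_comm, hf] at this
      exact (smul_ne_zero hc hf0) this
    have g1 : sg F b b * g ≠ 0 := by
      intro h
      have : (E v * sg F b b * E v) * g = 0 := by
        rw [mul_assoc, hg, mul_assoc, h, mul_zero]
      rw [c1, smul_mul_assoc, hg] at this
      exact (smul_ne_zero hc hg0) this
    intro h
    apply aux_ne_mul b f g f1 g1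
    have : f * (E v * sg F b b * E v) * g = f * sg F b b * g := by
      rw [← mul_assoc, ← mul_assoc, hf, mul_assoc _ (E v), hg]
    rw [← this, c1, mul_smul_comm, smul_mul_assoc, hf, h, smul_zero]
  have hzero : ∀ (a b : IncidenceAlgebra F X) (p q : X), p ≠ q → a * E p = a → E q * b = b →
      a * b = 0 := by
    intro a b p q hpq ha hb
    rw [← ha, ← hb, mul_assoc, ← mul_assoc (E p), hEO _ _ hpq, zero_mul, mul_zero]
  have gen2 : ∀ e m n : IncidenceAlgebra F X, e * e = e → e * m + m * e = m → m * m = 0 →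
      e * n + n * e = n → n * n = 0 → m * n + n * m = 0 → ψ m * ψ n + ψ n * ψ m = 0 := by
    intro e m n he hem hmm hen hnn hmn
    have i0 := (gen e (m + n) he (by
      rw [mul_add, add_mul]; nth_rewrite 3 [← hem]; nth_rewrite 3 [← hen]; abel) (by
      have : (m + n) * (m + n) = m * m + n * n + (m * n + n * m) := by noncomm_ring
      rw [this, hmm, hnn, hmn]; simp)).2
    have i1 := (gen e m he hem hmm).2
    have i2 := (gen e n he hen hnn).2
    have : (ψ m + ψ n) * (ψ m + ψ n) = ψ m * ψ m + ψ n * ψ n + (ψ m * ψ n + ψ n * ψ m) := by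
      noncomm_ring
    rw [← map_add, i0, i1, i2] at this
    simpa using this.symm
  have hJ2 : ∀ x y v, x < v → y < v → M x v * M y v + M y v * M x v = 0 := by
    intro x y v hx hy
    simp only [hM]
    apply gen2 (sg F v v) _ _ (sg_same le_rfl le_rfl)
    · rw [sg_same hx.le le_rfl, sg_diff le_rfl hx.le hx.ne', zero_add]
    · exact sg_diff hx.le hx.le hx.ne'
    · rw [sg_same hy.le le_rfl, sg_diff le_rfl hy.le hy.ne', zero_add]
    · exact sg_diff hy.le hy.le hy.ne'
    · rw [sg_diff hx.le hy.le hy.ne', sg_diff hy.le hx.le hx.ne', zero_add]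
  have hJ3 : ∀ x y v, v < x → v < y → M v x * M v y + M v y * M v x = 0 := by
    intro x y v hx hy
    simp only [hM]
    apply gen2 (sg F v v) _ _ (sg_same le_rfl le_rfl)
    · rw [sg_same le_rfl hx.le, sg_diff hx.le le_rfl hx.ne', add_zero]
    · exact sg_diff hx.le hx.le hx.ne'
    · rw [sg_same le_rfl hy.le, sg_diff hy.le le_rfl hy.ne', add_zero]
    · exact sg_diff hy.le hy.le hy.ne'
    · rw [sg_diff hx.le hy.le hx.ne', sg_diff hy.le hx.le hy.ne', zero_add]
  have hJ1 : ∀ x y z, x < y → y < z → M x y * M y z + M y z * M x y = M x z := by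
    intro x y z hxy hyz
    have hxz := hxy.trans hyz
    have i := hid (sg F y y + sg F x y + sg F y z + sg F x z) (by
      simp only [mul_add, add_mul, sg_same hxy.le hyz.le, sg_same hxy.le (le_refl y),
        sg_same (le_refl y) hyz.le, sg_same (le_refl y) (le_refl y),
        sg_diff (le_refl y) hxy.le hxy.ne', sg_diff (le_refl y) hxz.le hxy.ne',
        sg_diff hxy.le hxy.le hxy.ne', sg_diff hxy.le hxz.le hxy.ne',
        sg_diff hyz.le (le_refl y) hyz.ne', sg_diff hyz.le hyz.le hyz.ne',
        sg_diff hyz.le hxy.le hxz.ne', sg_diff hyz.le hxz.le hxz.ne',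
        sg_diff hxz.le (le_refl y) hyz.ne', sg_diff hxz.le hyz.le hyz.ne',
        sg_diff hxz.le hxy.le hxz.ne', sg_diff hxz.le hxz.le hxz.ne', add_zero]
      abel)
    simp only [map_add, ← hM] at i
    rw [hME] at i
    have r1 : E y * M x z = 0 := by
      rw [hdec x z hxz, mul_add, ← mul_assoc, ← mul_assoc, ← mul_assoc, ← mul_assoc,
        hEO _ _ hxy.ne', hEO _ _ hyz.ne]; simp
    have r2 : M x z * E y = 0 := by
      rw [hdec x z hxz, add_mul, mul_assoc, mul_assoc (E z * _),
        hEO _ _ hxy.ne, hEO _ _ hyz.ne']; simp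
    have ex : (E y + M x y + M y z + M x z) * (E y + M x y + M y z + M x z)
      = E y * E y + (E y * M x y + M x y * E y) + (E y * M y z + M y z * E y)
        + (M x y * M y z + M y z * M x y) + M x y * M x y + M y z * M y z + M x z * M x z
        + E y * M x z + M x z * E y + (M x y * M x z + M x z * M x y)
        + (M y z * M x z + M x z * M y z) := by noncomm_ring
    rw [i, hEE, (hyr x y hxy).1, (hxr y z hyz).1, (hxr x y hxy).2, (hxr y z hyz).2,
      (hxr x z hxz).2, r1, r2, hJ3 _ _ _ hxy hxz, hJ2 _ _ _ hyz hxz] at ex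
    simpa using ex.symm
  -- types
  have hT : ∀ x y, x < y → E x * M x y * E y = M x y → E x * M x y = M x y ∧ M x y * E y = M x y := by
    intro x y h e
    constructor
    · rw [← e, ← mul_assoc, ← mul_assoc, hEE]
    · rw [← e, mul_assoc, hEE]
  have hnT : ∀ x y, x < y → ¬ E x * M x y * E y = M x y →
      E y * M x y = M x y ∧ M x y * E x = M x y := by
    intro x y h n
    have e : E y * M x y * E x = M x y := by
      have d := hdec x y h
      rcases hdich x y h with h0 | h0
      · rw [h0, zero_add] at d; exact d.symm
      · rw [h0, add_zero] at d; exact absurd d.symm n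
    constructor
    · rw [← e, ← mul_assoc, ← mul_assoc, hEE]
    · rw [← e, mul_assoc, hEE]
  refine (aux_conn hconn (fun x y => E x * M x y * E y = M x y) ?_ ?_ ?_).elim ?_ ?_
  rotate_left 3
  · intro hall
    left
    have := aux_mult ψ (by simpa only [hE] using hEO) (by simpa only [hE] using hEE)
      (by simpa only [hE, hM] using hall) (by
        intro x y z hxy hyz
        have j := hJ1 x y z hxy hyz
        rw [hzero (M y z) (M x y) z x (hxy.trans hyz).ne' (hT y z hyz (hall _ _ hyz)).2
          (hT x y hxy (hall _ _ hxy)).1, add_zero] at j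
        simpa only [hM] using j)
    exact this
  · intro hall
    right
    intro f g
    have := aux_mult ((MulOpposite.opLinearEquiv F).toLinearMap ∘ₗ ψ) (by
        intro x y h
        simp only [LinearMap.comp_apply, LinearEquiv.coe_coe, MulOpposite.coe_opLinearEquiv, ← hE,
          ← MulOpposite.op_mul, hEO _ _ h.symm, MulOpposite.op_zero]) (by
        intro x
        simp only [LinearMap.comp_apply, LinearEquiv.coe_coe, MulOpposite.coe_opLinearEquiv, ← hE,
          ← MulOpposite.op_mul, hEE]) (by
        intro x y h
        simp only [LinearMap.comp_apply, LinearEquiv.coe_coe, MulOpposite.coe_opLinearEquiv, ← hE,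
          ← hM, ← MulOpposite.op_mul, (hnT x y h (hall _ _ h)).1, (hnT x y h (hall _ _ h)).2]) (by
        intro x y z hxy hyz
        have j := hJ1 x y z hxy hyz
        rw [hzero (M x y) (M y z) x z (hxy.trans hyz).ne (hnT x y hxy (hall _ _ hxy)).2
          (hnT y z hyz (hall _ _ hyz)).1, zero_add] at j
        simp only [LinearMap.comp_apply, LinearEquiv.coe_coe, MulOpposite.coe_opLinearEquiv,
          ← hM, ← MulOpposite.op_mul, j]) f g
    simp only [LinearMap.comp_apply, LinearEquiv.coe_coe, MulOpposite.coe_opLinearEquiv,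
      ← MulOpposite.op_mul] at this
    exact MulOpposite.op_injective this
  · intro x y z hxy hyz
    have j := hJ1 x y z hxy hyz
    have j0 := hM0 x z (hxy.trans hyz).le
    constructor
    · intro a
      by_contra b
      have a' := hT _ _ hxy a
      have b' := hnT _ _ hyz b
      rw [hzero _ _ y z hyz.ne a'.2 b'.1, hzero _ _ y x hxy.ne' b'.2 a'.1, add_zero] at j
      exact j0 j.symm
    · intro b
      by_contra a
      have a' := hnT _ _ hxy a
      have b' := hT _ _ hyz b
      rw [hzero _ _ x y hxy.ne a'.2 b'.1, hzero _ _ z y hyz.ne' b'.2 a'.1, add_zero] at j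
      exact j0 j.symm
  · have : ∀ x y v, x < v → y < v → E x * M x v * E v = M x v → E y * M y v * E v = M y v := by
      intro x y v hx hy a
      by_contra b
      have hne : y ≠ x := by rintro rfl; exact b a
      have a' := hT _ _ hx a
      have b' := hnT _ _ hy b
      have j := hJ2 x y v hx hy
      rw [hzero (M y v) (M x v) y x hne b'.2 a'.1, add_zero] at j
      exact hprod v _ _ a'.2 b'.1 (hM0 _ _ hx.le) (hM0 _ _ hy.le) j
    exact fun x y v hx hy => ⟨this x y v hx hy, this y x v hy hx⟩
  · have : ∀ x y v, v < x → v < y → E v * M v x * E x = M v x → E v * M v y * E y = M v y := by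
      intro x y v hx hy a
      by_contra b
      have hne : x ≠ y := by rintro rfl; exact b a
      have a' := hT _ _ hx a
      have b' := hnT _ _ hy b
      have j := hJ3 x y v hx hy
      rw [hzero (M v x) (M v y) x y hne a'.2 b'.1, zero_add] at j
      exact hprod v _ _ b'.2 a'.1 (hM0 _ _ hy.le) (hM0 _ _ hx.le) j
    exact fun x y v hx hy => ⟨this x y v hx hy, this y x v hy hx⟩

lemma aux_idem_pow {A : Type*} [Ring A] [Algebra F A] (e f : A) (he : e * e = e) (hf : f * f = f)
    (hef : e * f = 0) (hfe : f * e = 0) (ω : F) (n : ℕ) :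
    (e + ω • f) ^ (n + 1) = e + ω ^ (n + 1) • f := by
  induction n with
  | zero => simp
  | succ n ih =>
    rw [pow_succ, ih, add_mul, mul_add, mul_add, he, mul_smul_comm, hef, smul_mul_assoc, hfe,
      smul_mul_assoc, mul_smul_comm, hf, smul_smul, ← pow_succ]
    simp

lemma aux_center (hconn : PosetConnected X) (x0 : X) (u : IncidenceAlgebra F X)
    (hu : ∀ f, u * f = f * u) : u = u x0 x0 • (1 : IncidenceAlgebra F X) := by
  have hd : ∀ x y, x ≤ y → u x x = u y y := by
    intro x y h
    have := congrArg (fun f : IncidenceAlgebra F X => f x y) (hu (sg F x y))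
    rw [aux_mul_apply, aux_mul_apply] at this
    simpa [sg_apply h] using this
  have hall : ∀ y, u x0 x0 = u y y := by
    intro y
    induction hconn x0 y with
    | refl => rfl
    | tail _ h ih =>
      rcases h with h | h
      · rw [ih, hd _ _ h]
      · rw [ih, hd _ _ h]
  ext a b hab
  rw [constSMul_apply, one_apply]
  by_cases h : a = b
  · subst h; simp [hall a]
  · have := congrArg (fun f : IncidenceAlgebra F X => f a b) (hu (sg F a a))
    rw [aux_mul_apply, aux_mul_apply] at this
    simp [sg_apply, Ne.symm h] at this
    simp [h, ← this]

end jor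

/-- for `k ≥ 3` over a field with a primitive `(k−1)`-th root of unity and
`char F ∤ k`, every bijective linear `k`-potent preserver of the incidence algebra of a finite
connected poset is `r·ψ` with `r^{k−1} = 1` and `ψ` an automorphism or anti-automorphism. -/
theorem stmt_18 (k : ℕ) (hk : 3 ≤ k)
    {X : Type*} [PartialOrder X] [Fintype X] [LocallyFiniteOrder X] [DecidableEq X]
    {F : Type*} [Field F]
    (hroot : ∃ ε : F, ε ^ (k - 1) = 1 ∧ ∀ m : ℕ, 0 < m → m < k - 1 → ε ^ m ≠ 1)
    (hchar : ¬ ringChar F ∣ k)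
    (hconn : PosetConnected X)
    (φ : IncidenceAlgebra F X →ₗ[F] IncidenceAlgebra F X)
    (hbij : Function.Bijective φ)
    (hpres : ∀ f : IncidenceAlgebra F X, f ^ k = f → (φ f) ^ k = φ f) :
    ∃ (r : F) (ψ : IncidenceAlgebra F X →ₗ[F] IncidenceAlgebra F X),
      r ^ (k - 1) = 1 ∧ Function.Bijective ψ ∧
      ((∀ f g : IncidenceAlgebra F X, ψ (f * g) = ψ f * ψ g) ∨
        (∀ f g : IncidenceAlgebra F X, ψ (f * g) = ψ g * ψ f)) ∧
      φ = r • ψ := by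
  obtain ⟨ε, hε1, hε2⟩ := hroot
  have hkF : (k : F) ≠ 0 := fun h => hchar ((ringChar.spec F k).1 h)
  have h2 := aux_two k hk ε hε1 hε2 hkF
  obtain ⟨m, rfl⟩ : ∃ m, k = m + 1 := ⟨k - 1, by omega⟩
  rcases isEmpty_or_nonempty X with hX | ⟨⟨x0⟩⟩
  · have hs : ∀ f g : IncidenceAlgebra F X, f = g := by
      intro f g; ext a; exact hX.elim a
    exact ⟨1, φ, one_pow _, hbij, Or.inl fun f g => hs _ _, (one_smul _ _).symm⟩
  have hidk : ∀ e : IncidenceAlgebra F X, e * e = e → e ^ (m + 1) = e := by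
    intro e he
    have := aux_idem_pow (F := F) e 0 he (by simp) (by simp) (by simp) 0 m
    simpa using this
  have horth : ∀ e f : IncidenceAlgebra F X, e * e = e → f * f = f → e * f = 0 → f * e = 0 →
      φ e * φ f = 0 ∧ φ f * φ e = 0 := by
    intro e f he hf hef hfe
    refine aux_orth (m + 1) hk ε hε1 hε2 hkF _ _ (hpres _ (hidk e he)) (hpres _ (hidk f hf)) ?_
    intro ω hω
    rw [← map_smul, ← map_add]
    apply hpres
    rw [aux_idem_pow e f he hf hef hfe, pow_succ]
    simp only [Nat.add_sub_cancel] at hω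
    rw [hω, one_mul]
  have hu : ∀ e : IncidenceAlgebra F X, e * e = e → φ e * φ 1 = φ e * φ e ∧ φ 1 * φ e = φ e * φ e := by
    intro e he
    have he' : (1 - e) * (1 - e) = 1 - e := by
      rw [mul_sub, sub_mul, sub_mul, he]; simp
    have := horth e (1 - e) he he' (by rw [mul_sub, he]; simp) (by rw [sub_mul, he]; simp)
    rw [map_sub, mul_sub, sub_mul] at this
    exact ⟨sub_eq_zero.1 this.1, sub_eq_zero.1 this.2⟩
  have hcs : ∀ x y : X, x ≤ y → φ 1 * φ (sg F x y) = φ (sg F x y) * φ 1 := by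
    intro x y h
    have c0 := hu (sg F x x) (sg_same le_rfl le_rfl)
    rcases h.eq_or_lt with rfl | h
    · rw [c0.1, c0.2]
    · have c1 := hu (sg F x x + sg F x y) (by
        rw [add_mul, mul_add, mul_add, sg_same le_rfl le_rfl, sg_same le_rfl h.le,
          sg_diff h.le le_rfl h.ne', sg_diff h.le h.le h.ne']; simp)
      have := c1.2.trans c1.1.symm
      rw [map_add, mul_add, add_mul, c0.1, c0.2] at this
      exact add_left_cancel this
  have hcent : ∀ f, φ 1 * f = f * φ 1 := by
    intro f
    obtain ⟨a, rfl⟩ := hbij.2 f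
    rw [sg_expand a]
    simp only [map_sum, map_smul, Finset.mul_sum, Finset.sum_mul]
    refine Finset.sum_congr rfl fun x _ => Finset.sum_congr rfl fun y _ => ?_
    by_cases h : x ≤ y
    · rw [mul_smul_comm, smul_mul_assoc, hcs x y h]
    · rw [apply_eq_zero_of_not_le h]; simp
  obtain ⟨r, hr⟩ : ∃ r : F, φ 1 = r • (1 : IncidenceAlgebra F X) :=
    ⟨_, aux_center hconn x0 _ hcent⟩
  have hone : (1 : IncidenceAlgebra F X) ≠ 0 := by
    intro h
    have := congrArg (fun f : IncidenceAlgebra F X => f x0 x0) h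
    simp at this
  have hr0 : r ≠ 0 := by
    rintro rfl
    rw [zero_smul] at hr
    exact hone (hbij.1 (hr.trans (map_zero φ).symm))
  have hrm : r ^ m = 1 := by
    have := hpres 1 (one_pow _)
    rw [hr, smul_pow, one_pow] at this
    have h3 := smul_left_injective F hone this
    rw [pow_succ] at h3
    exact mul_right_cancel₀ hr0 (h3.trans (one_mul r).symm)
  have hψbij : Function.Bijective (r⁻¹ • φ) := by
    constructor
    · intro a b h
      exact hbij.1 (smul_right_injective _ (inv_ne_zero hr0) h)
    · intro b
      obtain ⟨a, ha⟩ := hbij.2 (r • b)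
      exact ⟨a, by rw [LinearMap.smul_apply, ha, smul_smul, inv_mul_cancel₀ hr0, one_smul]⟩
  refine ⟨r, r⁻¹ • φ, by simpa using hrm, hψbij, ?_, by rw [smul_smul, mul_inv_cancel₀ hr0, one_smul]⟩
  refine aux_jordan h2 hconn _ hψbij ?_ ?_ ?_
  · rw [LinearMap.smul_apply, hr, smul_smul, inv_mul_cancel₀ hr0, one_smul]
  · intro e he
    have := (hu e he).1
    rw [hr, mul_smul_comm, mul_one] at this
    rw [LinearMap.smul_apply, smul_mul_assoc, mul_smul_comm, ← this, smul_smul r⁻¹ r,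
      inv_mul_cancel₀ hr0, one_smul]
  · intro e f he hf hef hfe
    rw [LinearMap.smul_apply, LinearMap.smul_apply, smul_mul_assoc, mul_smul_comm,
      (horth e f he hf hef hfe).1, smul_zero, smul_zero]
end
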